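/- arXiv:1801.08112 — 4 statements merged into one kernel-verified Lean document; each statement's English description precedes it below -/
import Mathlib

section
/- Let s, N be natural numbers and let P ∈ ℂ[θ₁,…,θ_s, u₀,…,u_N] be a nonzero polynomial. Then there exist a nonzero polynomial R ∈ ℂ[θ₁,…,θ_s], a natural number h, and a nonzero polynomial W ∈ ℂ[u₀,…,u_h] such that: for every θ̂ ∈ ℂ^s with R(θ̂) ≠ 0 and every function û : ℂ → ℂ that is complex analytic in a neighborhood of 0 and satisfies W(û(0), û'(0), …, û^{(h)}(0)) ≠ 0, the function t ↦ P(θ̂₁,…,θ̂_s, û(t), û'(t), …, û^{(N)}(t)) does not vanish identically on any neighborhood of 0 (equivalently, it is a nonzero germ of an analytic function at 0). -/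
open MvPolynomial

/-!
Collect `P` as `∑ⱼ cⱼ(θ) mⱼ(u)` with distinct monomials `mⱼ` in `u₀, …, u_N`, and take for `R` one
of the nonzero coefficients `cⱼ`. If `t ↦ ∑ⱼ cⱼ(θ) mⱼ(û(t), …)` vanishes near `0`, so do all its
derivatives at `0`; with `D` the total derivative `uᵢ ↦ uᵢ₊₁` on `ℂ[u₀, u₁, …]` this says that the
vector `(cⱼ(θ))ⱼ` is killed by every row `((Dⁱ mⱼ)(û(0), û'(0), …))ⱼ`. Hence
`W = det (D^{iₖ} mⱼ)` works for any orders `iₖ` that make it a nonzero polynomial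
(a generalized Wronskian, which does not depend on `θ`).

Such orders exist because there is one jet, `aₙ = ∑ₖ λₖⁿ` (the jet at `0` of `∑ₖ exp (λₖ t)`), with
the property that a nonzero `Q ∈ ℂ[u₀, …, u_N]` has `(Dⁱ Q)(a) ≠ 0` for some `i`
(`exists_generic_jet`). The `λ₀, …, λ_N` are taken linearly independent over `ℕ`. Substituting
`uᵢ = ∑ₖ λₖⁱ xₖ` is injective on `ℂ[u₀, …, u_N]` by Vandermonde and turns `D` into the derivation
`xₖ ↦ λₖ xₖ`, for which the monomials in `x` are eigenvectors with distinct eigenvalues.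
-/

/-- The total derivative `uᵢ ↦ uᵢ₊₁` on the differential polynomial ring `ℂ[u₀, u₁, …]`. -/
noncomputable def totalDeriv : Derivation ℂ (MvPolynomial ℕ ℂ) (MvPolynomial ℕ ℂ) :=
  mkDerivation ℂ (fun i => X (i + 1))

/-- The Euler-type derivation `xₖ ↦ λₖ xₖ`. -/
noncomputable def eulerDeriv {n : ℕ} (l : Fin n → ℂ) :
    Derivation ℂ (MvPolynomial (Fin n) ℂ) (MvPolynomial (Fin n) ℂ) :=
  mkDerivation ℂ (fun k => C (l k) * X k)

/-- The substitution `uᵢ ↦ ∑ₖ λₖⁱ xₖ`, i.e. the `i`-th derivative of `∑ₖ exp (λₖ t)` with `xₖ`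
standing for `exp (λₖ t)`. -/
noncomputable def expSubst {n : ℕ} (l : Fin n → ℂ) :
    MvPolynomial ℕ ℂ →ₐ[ℂ] MvPolynomial (Fin n) ℂ :=
  aeval (fun i => ∑ k, C (l k ^ i) * X k)

lemma expSubst_totalDeriv {n : ℕ} (l : Fin n → ℂ) (q : MvPolynomial ℕ ℂ) :
    expSubst l (totalDeriv q) = eulerDeriv l (expSubst l q) := by
  induction q using MvPolynomial.induction_on with
  | C a => simp [totalDeriv, eulerDeriv, expSubst, derivation_C, algebraMap_eq]
  | add p q hp hq => simp [hp, hq]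
  | mul_X p i hp =>
    have h : expSubst l (totalDeriv (X i)) = eulerDeriv l (expSubst l (X i)) := by
      simp only [totalDeriv, eulerDeriv, expSubst, mkDerivation_X, aeval_X, map_sum,
        Derivation.leibniz, derivation_C, smul_eq_mul, mul_zero, add_zero]
      refine Finset.sum_congr rfl fun k _ => ?_
      rw [pow_succ, C_mul, mul_assoc]
    simp only [Derivation.leibniz, map_add, map_mul, smul_eq_mul, hp, h]

lemma expSubst_totalDeriv_pow {n : ℕ} (l : Fin n → ℂ) (i : ℕ) (q : MvPolynomial ℕ ℂ) :
    expSubst l ((totalDeriv.toLinearMap ^ i) q)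
      = ((eulerDeriv l).toLinearMap ^ i) (expSubst l q) := by
  induction i with
  | zero => rfl
  | succ i ih =>
    rw [pow_succ', pow_succ', Module.End.mul_apply, Module.End.mul_apply, ← ih]
    exact expSubst_totalDeriv l _

lemma eulerDeriv_monomial {n : ℕ} (l : Fin n → ℂ) (e : Fin n →₀ ℕ) (c : ℂ) :
    eulerDeriv l (monomial e c) = (∑ k, (e k : ℂ) * l k) • monomial e c := by
  rw [eulerDeriv, mkDerivation_monomial, Finsupp.sum_fintype _ _ (by simp), Finset.sum_smul,
    Finset.smul_sum]
  refine Finset.sum_congr rfl fun k _ => ?_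
  by_cases hk : e k = 0
  · simp [hk]
  · have h1 : Finsupp.single k 1 ≤ e := by
      rw [Finsupp.single_le_iff]; omega
    have h2 : (monomial (e - Finsupp.single k 1) ((e k : ℕ) : ℂ)) * (C (l k) * X k)
        = monomial e ((e k : ℂ) * l k) := by
      rw [X, C_mul_monomial, monomial_mul, tsub_add_cancel_of_le h1, mul_one]
    rw [smul_eq_mul, h2, smul_monomial, smul_monomial, smul_eq_mul, smul_eq_mul, mul_comm]

lemma eulerDeriv_pow_monomial {n : ℕ} (l : Fin n → ℂ) (i : ℕ) (e : Fin n →₀ ℕ) (c : ℂ) :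
    ((eulerDeriv l).toLinearMap ^ i) (monomial e c)
      = (∑ k, (e k : ℂ) * l k) ^ i • monomial e c := by
  induction i with
  | zero => simp
  | succ i ih =>
    rw [pow_succ', Module.End.mul_apply, ih, map_smul]
    change _ • (eulerDeriv l) _ = _
    rw [eulerDeriv_monomial, smul_smul, pow_succ]

/-- Exponential monomials with distinct exponents are linearly independent, in terms of the
derivatives at `0`. -/
lemma eq_zero_of_forall_sum_pow {ι : Type*} (S : Finset ι) (c m : ι → ℂ)
    (hm : Function.Injective m) (h : ∀ i : ℕ, ∑ e ∈ S, c e * m e ^ i = 0) :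
    ∀ e ∈ S, c e = 0 := by
  classical
  have key (p : Polynomial ℂ) : ∑ e ∈ S, c e * p.eval (m e) = 0 := by
    simp only [Polynomial.eval_eq_sum_range, Finset.mul_sum]
    rw [Finset.sum_comm]
    refine Finset.sum_eq_zero fun i _ => ?_
    rw [← mul_zero (p.coeff i), ← h i, Finset.mul_sum]
    exact Finset.sum_congr rfl fun e _ => by ring
  intro e he
  have h1 := key (∏ e' ∈ S.erase e, (Polynomial.X - Polynomial.C (m e')))
  rw [Finset.sum_eq_single_of_mem e he] at h1
  · refine (mul_eq_zero.mp h1).resolve_right ?_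
    rw [Polynomial.eval_prod, ← ne_eq, Finset.prod_ne_zero_iff]
    intro e' he'
    simpa [sub_eq_zero] using fun h' => (Finset.mem_erase.mp he').1 (hm h').symm
  · intro b hb hbe
    rw [Polynomial.eval_prod, Finset.prod_eq_zero (Finset.mem_erase.mpr ⟨hbe, hb⟩) (by simp),
      mul_zero]

lemma exists_nat_independent (n : ℕ) :
    ∃ l : Fin n → ℂ, Function.Injective l ∧
      Function.Injective (fun e : Fin n →₀ ℕ => ∑ k, (e k : ℂ) * l k) := by
  -- Powers of a transcendental number.
  obtain ⟨x, hx⟩ : ∃ x : ℂ, Transcendental ℤ x :=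
    ⟨algebraMap ℝ ℂ (liouvilleNumber (2 : ℕ)),
      (transcendental_algebraMap_iff (algebraMap ℝ ℂ).injective).mpr
        (transcendental_liouvilleNumber le_rfl)⟩
  have hinj := transcendental_iff_injective.mp hx
  refine ⟨fun k => x ^ (k : ℕ), fun a b hab => ?_, fun e f hef => ?_⟩
  · have : (Polynomial.X ^ (a : ℕ) : Polynomial ℤ) = Polynomial.X ^ (b : ℕ) :=
      hinj (by simpa using hab)
    have h2 := congrArg Polynomial.natDegree this
    simp only [Polynomial.natDegree_X_pow] at h2
    exact Fin.ext h2
  · have : (∑ k, Polynomial.C (e k : ℤ) * Polynomial.X ^ (k : ℕ) : Polynomial ℤ)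
        = ∑ k, Polynomial.C (f k : ℤ) * Polynomial.X ^ (k : ℕ) :=
      hinj (by simpa [map_sum] using hef)
    ext k
    have h2 := congrArg (fun p => Polynomial.coeff p (k : ℕ)) this
    simpa [Polynomial.finsetSum_coeff, Polynomial.coeff_X_pow, Polynomial.coeff_C_mul,
      Fin.val_inj] using h2

/-- There is a jet which is not a formal solution of any nontrivial algebraic differential equation
of order `N` with constant coefficients. -/
lemma exists_generic_jet (N : ℕ) : ∃ a : ℕ → ℂ, ∀ Q : MvPolynomial (Fin (N + 1)) ℂ,
    (∀ i : ℕ, eval a ((totalDeriv.toLinearMap ^ i) (rename Fin.val Q)) = 0) → Q = 0 := by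
  obtain ⟨l, hl, hl'⟩ := exists_nat_independent (N + 1)
  have hev (y : Fin (N + 1) → ℂ) (q : MvPolynomial ℕ ℂ) :
      eval y (expSubst l q) = eval (fun i => ∑ k, l k ^ i * y k) q := by
    induction q using MvPolynomial.induction_on with
    | C a => simp [expSubst, algebraMap_eq]
    | add p q hp hq => simp [hp, hq]
    | mul_X p i hp =>
      rw [map_mul, map_mul, hp, map_mul]
      simp [expSubst]
  refine ⟨fun i => ∑ k, l k ^ i * 1, fun Q hQ => ?_⟩
  set q := expSubst l (rename Fin.val Q) with hq
  have hq0 : q = 0 := by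
    have h1 : ∀ i : ℕ, ∑ e ∈ q.support, coeff e q * (∑ k, (e k : ℂ) * l k) ^ i = 0 := by
      intro i
      have h2 := hQ i
      rw [← hev (fun _ => 1), expSubst_totalDeriv_pow, ← hq, q.as_sum, map_sum, map_sum] at h2
      rw [← h2]
      refine Finset.sum_congr rfl fun e _ => ?_
      rw [eulerDeriv_pow_monomial, smul_eval, eval_monomial]
      simp [mul_comm]
    have h3 := eq_zero_of_forall_sum_pow q.support (fun e => coeff e q) _ hl' h1
    rw [q.as_sum]
    exact Finset.sum_eq_zero fun e he => by rw [h3 e he, monomial_zero]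
  -- `q` vanishing as a function gives `Q` vanishing on the range of the Vandermonde matrix.
  refine MvPolynomial.funext fun v => ?_
  have hunit : IsUnit (Matrix.vandermonde l).transpose := by
    rw [Matrix.isUnit_iff_isUnit_det, Matrix.det_transpose, isUnit_iff_ne_zero]
    exact Matrix.det_vandermonde_ne_zero_iff.mpr hl
  obtain ⟨y, hy⟩ := Matrix.mulVec_surjective_iff_isUnit.mpr hunit v
  have h4 := hev y (rename Fin.val Q)
  rw [← hq, hq0, eval_rename, map_zero] at h4
  rw [map_zero, h4, ← hy]
  rfl

/-- If the columns of a matrix with finitely many columns are linearly independent, some square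
submatrix using all columns is invertible. -/
lemma exists_rows_det_ne_zero {J : Type*} [Fintype J] [DecidableEq J] (r : ℕ → J → ℂ)
    (h : ∀ c : J → ℂ, (∀ i, ∑ j, r i j * c j = 0) → c = 0) :
    ∃ f : J → ℕ, (Matrix.of fun k j => r (f k) j).det ≠ 0 := by
  have hspan : Submodule.span ℂ (Set.range r) = ⊤ := by
    by_contra hne
    obtain ⟨g, hg, hle⟩ := Submodule.exists_le_ker_of_lt_top _ (lt_top_iff_ne_top.mpr hne)
    refine hg ?_
    have hgs (v : J → ℂ) : g v = ∑ j, v j * g (Pi.single j 1) := by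
      conv_lhs => rw [pi_eq_sum_univ' v]
      simp [map_sum]
    have h0 := h (fun j => g (Pi.single j 1)) fun i => by
      rw [← hgs]
      exact hle (Submodule.subset_span ⟨i, rfl⟩)
    refine LinearMap.ext fun v => ?_
    rw [hgs]
    exact Finset.sum_eq_zero fun j _ => by rw [congrFun h0 j, Pi.zero_apply, mul_zero]
  obtain ⟨κ, a, -, hs, hli⟩ := exists_linearIndependent' ℂ r
  let b := Module.Basis.mk hli (by rw [hs, hspan])
  let e : J ≃ κ := (Pi.basisFun ℂ J).indexEquiv b
  refine ⟨a ∘ e, ?_⟩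
  have h2 : LinearIndependent ℂ (Matrix.of fun k j => r ((a ∘ e) k) j).row :=
    hli.comp e e.injective
  rw [Matrix.linearIndependent_rows_iff_isUnit, Matrix.isUnit_iff_isUnit_det] at h2
  exact h2.ne_zero

lemma hasDerivAt_eval_jet (u : ℂ → ℂ) (t : ℂ) (hu : AnalyticAt ℂ u t) (q : MvPolynomial ℕ ℂ) :
    HasDerivAt (fun t => eval (fun i => iteratedDeriv i u t) q)
      (eval (fun i => iteratedDeriv i u t) (totalDeriv q)) t := by
  induction q using MvPolynomial.induction_on with
  | C a => simpa [totalDeriv, derivation_C] using hasDerivAt_const t a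
  | add p q hp hq =>
    simp only [map_add]
    exact hp.add hq
  | mul_X p i hp =>
    have h1 : HasDerivAt (iteratedDeriv i u) (iteratedDeriv (i + 1) u t) t := by
      rw [iteratedDeriv_succ]
      refine DifferentiableAt.hasDerivAt (AnalyticAt.differentiableAt ?_)
      rw [iteratedDeriv_eq_iterate]
      exact hu.iterated_deriv i
    have hX : totalDeriv (X i) = X (i + 1) := mkDerivation_X _ _ _
    simp only [map_mul, eval_X, Derivation.leibniz, map_add, smul_eq_mul, hX]
    rw [add_comm, mul_comm (iteratedDeriv i u t)]
    exact hp.mul h1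

lemma eval_totalDeriv_pow_eq_zero (u : ℂ → ℂ) (hu : AnalyticAt ℂ u 0) (q : MvPolynomial ℕ ℂ)
    (h : ∀ᶠ t in nhds (0 : ℂ), eval (fun i => iteratedDeriv i u t) q = 0) (i : ℕ) :
    eval (fun i => iteratedDeriv i u 0) ((totalDeriv.toLinearMap ^ i) q) = 0 := by
  suffices hs : ∀ᶠ t in nhds (0 : ℂ),
      eval (fun i => iteratedDeriv i u t) ((totalDeriv.toLinearMap ^ i) q) = 0 from hs.self_of_nhds
  induction i with
  | zero => exact h
  | succ i ih =>
    filter_upwards [ih.eventually_nhds, hu.eventually_analyticAt] with t ht hut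
    rw [pow_succ', Module.End.mul_apply]
    have h1 := hasDerivAt_eval_jet u t hut ((totalDeriv.toLinearMap ^ i) q)
    exact h1.unique ((hasDerivAt_const t (0 : ℂ)).congr_of_eventuallyEq ht)

/-- A single `W` serves all nonzero polynomials whose monomials lie in a given finite set `S`. -/
lemma exists_wronskian (N : ℕ) (S : Finset (Fin (N + 1) →₀ ℕ)) :
    ∃ W : MvPolynomial ℕ ℂ, W ≠ 0 ∧ ∀ Q : MvPolynomial (Fin (N + 1)) ℂ, Q.support ⊆ S → Q ≠ 0 →
      ∀ u : ℂ → ℂ, AnalyticAt ℂ u 0 → eval (fun i => iteratedDeriv i u 0) W ≠ 0 →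
        ¬ ∀ᶠ t in nhds (0 : ℂ), eval (fun i : Fin (N + 1) => iteratedDeriv (i : ℕ) u t) Q = 0 := by
  obtain ⟨a, ha⟩ := exists_generic_jet N
  let w (i : ℕ) (j : S) : MvPolynomial ℕ ℂ :=
    (totalDeriv.toLinearMap ^ i) (rename Fin.val (monomial (j : Fin (N + 1) →₀ ℕ) (1 : ℂ)))
  have hw (x : ℕ → ℂ) (i : ℕ) (c : S → ℂ) : ∑ j, eval x (w i j) * c j
      = eval x ((totalDeriv.toLinearMap ^ i) (rename Fin.val (∑ j : S, monomial j.1 (c j)))) := by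
    simp only [map_sum]
    refine Finset.sum_congr rfl fun j _ => ?_
    have : monomial j.1 (c j) = c j • monomial j.1 (1 : ℂ) := by simp [smul_monomial]
    rw [this, map_smul, map_smul, smul_eval, mul_comm]
  have hcoeff (c : S → ℂ) (j : S) : coeff j.1 (∑ j : S, monomial j.1 (c j)) = c j := by
    classical
    simp [coeff_sum, coeff_monomial]
  classical
  obtain ⟨f, hf⟩ := exists_rows_det_ne_zero (fun i j => eval a (w i j)) fun c hc => by
    have h0 := ha (∑ j : S, monomial j.1 (c j)) fun i => by rw [← hw, hc i]
    ext j
    rw [← hcoeff c j, h0]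
    simp
  have hdet (x : ℕ → ℂ) : eval x (Matrix.of fun k j => w (f k) j).det
      = (Matrix.of fun k j => eval x (w (f k) j)).det := by
    rw [RingHom.map_det]
    rfl
  refine ⟨(Matrix.of fun k j => w (f k) j).det, fun h0 => hf ?_, ?_⟩
  · rw [← hdet a, h0, map_zero]
  · intro Q hQS hQ u hu hW hev
    refine hQ ?_
    have hQsum : Q = ∑ j : S, monomial j.1 (coeff j.1 Q) := by
      conv_lhs => rw [Q.as_sum]
      rw [Finset.sum_coe_sort S (fun j => monomial j (coeff j Q))]
      exact Finset.sum_subset hQS fun e _ he => by rw [notMem_support_iff.mp he, monomial_zero]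
    rw [hdet] at hW
    have hc : (fun j : S => coeff j.1 Q) = 0 := by
      refine Matrix.eq_zero_of_mulVec_eq_zero hW ?_
      ext k
      change ∑ j, eval _ (w (f k) j) * coeff j.1 Q = 0
      rw [hw, ← hQsum]
      refine eval_totalDeriv_pow_eq_zero u hu _ ?_ _
      filter_upwards [hev] with t ht
      rw [eval_rename]
      exact ht
    rw [hQsum]
    exact Finset.sum_eq_zero fun j _ => by rw [show coeff j.1 Q = 0 from congrFun hc j, monomial_zero]

/-- Lemma 3 (lem:nonzero_poly): for a nonzero polynomial
`P ∈ ℂ[θ₁,…,θ_s, u₀,…,u_N]` there are nonempty Zariski open sets of parameter values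
and of analytic input functions (the latter cut out by a nonzero polynomial `W` in the
first `h+1` Taylor coefficients) on which
`t ↦ P(θ̂, û(t), û'(t), …, û^{(N)}(t))` is a nonzero germ of analytic function at `0`. -/
theorem nonzero_poly_nonvanishing (s N : ℕ)
    (P : MvPolynomial (Fin s ⊕ Fin (N + 1)) ℂ) (hP : P ≠ 0) :
    ∃ R : MvPolynomial (Fin s) ℂ, R ≠ 0 ∧
      ∃ (h : ℕ) (W : MvPolynomial (Fin (h + 1)) ℂ), W ≠ 0 ∧
        ∀ θ : Fin s → ℂ, eval θ R ≠ 0 →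
          ∀ u : ℂ → ℂ, AnalyticAt ℂ u 0 →
            eval (fun i : Fin (h + 1) => iteratedDeriv (i : ℕ) u 0) W ≠ 0 →
              ¬ (∀ᶠ t in nhds (0 : ℂ),
                  eval (Sum.elim θ (fun i : Fin (N + 1) => iteratedDeriv (i : ℕ) u t)) P
                    = 0) := by
  -- `P` as a polynomial in the `u`-variables with coefficients in `ℂ[θ]`.
  let T : MvPolynomial (Fin s ⊕ Fin (N + 1)) ℂ ≃ₐ[ℂ]
      MvPolynomial (Fin (N + 1)) (MvPolynomial (Fin s) ℂ) :=
    (renameEquiv ℂ (Equiv.sumComm _ _)).trans (sumAlgEquiv ℂ (Fin (N + 1)) (Fin s))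
  have hT (θ : Fin s → ℂ) (v : Fin (N + 1) → ℂ) (p : MvPolynomial (Fin s ⊕ Fin (N + 1)) ℂ) :
      eval v (map (eval θ) (T p)) = eval (Sum.elim θ v) p := by
    induction p using MvPolynomial.induction_on with
    | C a => simp [T]
    | add p q hp hq => simp only [map_add, hp, hq]
    | mul_X p i hp =>
      simp only [map_mul, hp]
      rcases i with i | i <;> simp [T]
  have hTP : T P ≠ 0 := by simpa using hP
  obtain ⟨e, he⟩ := MvPolynomial.ne_zero_iff.mp hTP
  obtain ⟨W, hW0, hW⟩ := exists_wronskian N (T P).support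
  obtain ⟨W', hW'⟩ := exists_rename_eq_of_vars_subset_range W
    (Fin.val : Fin (W.vars.sup id + 1) → ℕ) Fin.val_injective fun i hi =>
      ⟨⟨i, Nat.lt_succ_of_le (Finset.le_sup (f := id) hi)⟩, rfl⟩
  refine ⟨coeff e (T P), he, W.vars.sup id, W', ?_, ?_⟩
  · rintro rfl
    exact hW0 (by rw [← hW', map_zero])
  · intro θ hθ u hu hWu hev
    refine hW (map (eval θ) (T P)) (support_map_subset _ _) ?_ u hu ?_ ?_
    · intro h0
      apply hθ
      rw [← coeff_map, h0, coeff_zero]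
    · rw [← hW', eval_rename]
      exact hWu
    · filter_upwards [hev] with t ht
      rw [hT, ht]
end

section
/- Let K be a field of characteristic zero equipped with a derivation δ, let F ⊆ K₀ ⊆ K be subfields such that K₀ has finite transcendence degree over F, and let u ∈ K be an element such that (i) δ(b) lies in the subfield K₀(u) generated by K₀ and u, for every b ∈ K₀, and (ii) the family (δ^h(u))_{h ∈ ℕ} of iterated derivatives of u is algebraically independent over F. Then the family (δ^h(u))_{h ∈ ℕ} is algebraically independent over K₀. -/
/-!
Suppose the derivatives of `u` are dependent over `K₀`. Then some `δ^[h] u` is algebraic over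
`K₀(u, …, δ^[h-1] u)`. Let `a` be a finite family in `K₀` such that `K₀` is algebraic over `F(a)`,
and let `M` be the algebraic closure of `F(a, u, …, δ^[h-1] u)` in `K`
(`exists_relative_algebraic_closure`). It contains `K₀` and `δ^[h] u`, and also `u`, hence
`δ(K₀) ⊆ K₀(u) ⊆ M`. So `δ` sends the generators of `F(a, u, …, δ^[h-1] u)` into `M`, and as
derivations extend uniquely along separable algebraic extensions (`deriv_mem_of_isAlgebraic`),
`δ(M) ⊆ M`. Consequently `M` contains all the derivatives of `u`. These are infinitely many
elements algebraically independent over `F`, but `M` has finite transcendence degree over `F`.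
-/

lemma isAlgebraic_subfield_of_range_subset {R K : Type*} [CommRing R] [Field K] [Algebra R K]
    (hinj : Function.Injective (algebraMap R K)) (N : Subfield K)
    (h : ∀ r : R, algebraMap R K r ∈ N) {x : K} (hx : IsAlgebraic R x) : IsAlgebraic N x := by
  let _ : Algebra R N := ((algebraMap R K).codRestrict N h).toAlgebra
  have : IsScalarTower R N K := IsScalarTower.of_algebraMap_eq fun _ => rfl
  refine hx.extendScalars fun a b hab => hinj ?_
  exact congrArg Subtype.val hab

/-- A dependent sequence has a term that is algebraic over the ring generated by the earlier
ones. -/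
lemma exists_isAlgebraic_of_not_algebraicIndependent {R K : Type*} [Field R] [Field K]
    [Algebra R K] (v : ℕ → K) (hv : ¬ AlgebraicIndependent R v) :
    ∃ h : ℕ, IsAlgebraic (Algebra.adjoin R (v '' Set.Iio h)) (v h) := by
  by_contra! hcon
  have key : ∀ h : ℕ, AlgebraicIndepOn R v (Set.Iio h) := by
    intro h
    induction h with
    | zero =>
      have : IsEmpty (Set.Iio (0 : ℕ)) := by simp
      exact algebraicIndependent_empty_type_iff.mpr (algebraMap R K).injective
    | succ h ih =>
      have : Set.Iio (h + 1) = insert h (Set.Iio h) := by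
        ext j; simp only [Set.mem_Iio, Set.mem_insert_iff]; omega
      rw [this]
      exact ih.insert (hcon h)
  refine hv (algebraicIndependent_of_finite_type' (algebraMap R K).injective ?_)
  intro t ht _ i hi
  obtain ⟨m, hm⟩ := ht.bddAbove
  have hsub : insert i t ⊆ Set.Iio (m + i + 1) := by
    intro j hj
    rcases hj with rfl | hj
    · simp only [Set.mem_Iio]; omega
    · have := hm hj; simp only [Set.mem_Iio]; omega
  exact ((AlgebraicIndepOn.insert_iff hi).mp ((key (m + i + 1)).mono hsub)).2

/-- For a subfield `M`, the subfield of those `x ∈ M` whose derivative is again in `M`. -/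
def derivSubfield {K : Type*} [Field K] (δ : K → K)
    (hδadd : ∀ a b : K, δ (a + b) = δ a + δ b)
    (hδmul : ∀ a b : K, δ (a * b) = δ a * b + a * δ b)
    (M : Subfield K) : Subfield K where
  carrier := {x | x ∈ M ∧ δ x ∈ M}
  zero_mem' := ⟨M.zero_mem, by
    have h := hδadd 0 0
    simp at h
    simp [h]⟩
  one_mem' := ⟨M.one_mem, by
    have h := hδmul 1 1
    simp at h
    simp [h]⟩
  add_mem' := fun {a b} ha hb => ⟨M.add_mem ha.1 hb.1, by
    rw [hδadd]; exact M.add_mem ha.2 hb.2⟩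
  mul_mem' := fun {a b} ha hb => ⟨M.mul_mem ha.1 hb.1, by
    rw [hδmul]; exact M.add_mem (M.mul_mem ha.2 hb.1) (M.mul_mem ha.1 hb.2)⟩
  neg_mem' := fun {a} ha => ⟨M.neg_mem ha.1, by
    have h0 := hδadd 0 0
    have h := hδadd a (-a)
    simp only [add_zero, add_neg_cancel, left_eq_add] at h0 h
    rw [h0] at h
    rw [← neg_eq_of_add_eq_zero_right h.symm]
    exact M.neg_mem ha.2⟩
  inv_mem' := fun a ha => ⟨M.inv_mem ha.1, by
    by_cases ha0 : a = 0
    · subst ha0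
      simpa using ha.2
    have h1 := hδmul 1 1
    have h := hδmul a a⁻¹
    simp only [mul_one, one_mul, left_eq_add] at h1
    rw [mul_inv_cancel₀ ha0, h1] at h
    have : δ a⁻¹ = -(δ a * a⁻¹) * a⁻¹ := by
      field_simp
      field_simp at h
      linear_combination -h
    rw [this]
    exact M.mul_mem (M.neg_mem (M.mul_mem ha.2 (M.inv_mem ha.1))) (M.inv_mem ha.1)⟩

/-- If `p` is the minimal polynomial of `x` over `N`, then applying `δ` to `p(x) = 0` gives
`δ x = -p^δ(x) / p'(x)`, where `p^δ` is `p` with `δ` applied to its coefficients; both `p^δ(x)` and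
`p'(x)` lie in `M`, and `p'(x) ≠ 0` in characteristic zero. -/
lemma deriv_mem_of_isAlgebraic {K : Type*} [Field K] [CharZero K] (δ : K → K)
    (hδadd : ∀ a b : K, δ (a + b) = δ a + δ b)
    (hδmul : ∀ a b : K, δ (a * b) = δ a * b + a * δ b)
    (M N : Subfield K)
    (hN : ∀ c ∈ N, c ∈ M ∧ δ c ∈ M) {x : K} (hxM : x ∈ M) (hx : IsAlgebraic N x) :
    δ x ∈ M := by
  have hδ0 : δ 0 = 0 := by simpa using hδadd 0 0
  have hpow : ∀ n : ℕ, δ (x ^ n) = n * x ^ (n - 1) * δ x := by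
    intro n
    induction n with
    | zero => simpa using hδmul 1 1
    | succ n ih =>
      rw [pow_succ, hδmul, ih]
      cases n with
      | zero => simp
      | succ n => simp; ring
  have hmem : ∀ p : Polynomial N, Polynomial.aeval x p ∈ M := by
    intro p
    rw [Polynomial.aeval_eq_sum_range]
    exact M.sum_mem fun i _ => M.mul_mem (hN _ (p.coeff i).2).1 (M.pow_mem hxM i)
  -- The difference below is `p^δ(x)`.
  have hD : ∀ p : Polynomial N, δ (Polynomial.aeval x p)
      - Polynomial.aeval x (Polynomial.derivative p) * δ x ∈ M := by
    intro p
    induction p using Polynomial.induction_on' with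
    | add p q hp hq =>
      have := M.add_mem hp hq
      convert this using 1
      simp only [map_add, hδadd]
      ring
    | monomial n c =>
      have : δ (c : K) * x ^ n ∈ M := M.mul_mem (hN _ c.2).2 (M.pow_mem hxM n)
      convert this using 1
      rw [Polynomial.derivative_monomial, Polynomial.aeval_monomial, Polynomial.aeval_monomial,
        hδmul]
      have h2 : δ (algebraMap N K c) = δ (c : K) := rfl
      rw [hpow, h2, map_mul, map_natCast]
      ring
  have hsep : (minpoly N x).Separable := (minpoly.irreducible hx.isIntegral).separable
  have hne := hsep.aeval_derivative_ne_zero (minpoly.aeval N x)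
  have h := hD (minpoly N x)
  rw [minpoly.aeval, hδ0, zero_sub] at h
  have h' := M.mul_mem (M.inv_mem (hmem (Polynomial.derivative (minpoly N x)))) (M.neg_mem h)
  rwa [neg_neg, inv_mul_cancel_left₀ hne] at h'

/-- For finite `t`, the field `M` is the algebraic closure of `F(t)` in `K`. Its finite
transcendence degree over `F` is recorded in the last clause. It is obtained as the closure of `t`
in the matroid of algebraic independence over `F`, whose rank function bounds the size of
independent sets in `M`. -/
lemma exists_relative_algebraic_closure {K : Type*} [Field K] (F : Subfield K) (t : Set K)
    (ht : t.Finite) :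
    ∃ M : Subfield K, F ≤ M ∧ t ⊆ M ∧ (∀ x, IsAlgebraic M x → x ∈ M) ∧
      (∀ N : Subfield K, F ≤ N → t ⊆ N → ∀ x ∈ M, IsAlgebraic N x) ∧
      ∀ v : ℕ → K, AlgebraicIndependent F v → ¬ ∀ h, v h ∈ M := by
  let Mt := AlgebraicIndependent.matroid F K
  obtain ⟨S, hS, hSalg⟩ := AlgebraicIndependent.matroid_isFlat_iff.mp (Mt.isFlat_closure t)
  have hmem : ∀ x, x ∈ S ↔ x ∈ Mt.closure t := fun x => by rw [← hS]; rfl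
  let M : Subfield K :=
    { S.toSubring with
      inv_mem' := fun x hx => (hmem _).mpr <| hSalg _ <|
        (isAlgebraic_algebraMap (⟨x, hx⟩ : S) : IsAlgebraic S x).inv }
  refine ⟨M, fun x hx => S.algebraMap_mem ⟨x, hx⟩, fun x hx => (hmem _).mpr
    (Mt.subset_closure t (by simp [Mt]) hx), fun x hx => (hmem _).mpr (hSalg x hx), ?_, ?_⟩
  · intro N hFN htN x hx
    have hx' : x ∈ Mt.closure t := (hmem x).mp hx
    rw [AlgebraicIndependent.matroid_closure_eq] at hx'
    have hxalg : IsAlgebraic (Algebra.adjoin F t) x := hx'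
    refine isAlgebraic_subfield_of_range_subset Subtype.val_injective N ?_ hxalg
    rintro ⟨r, hr⟩
    induction hr using Algebra.adjoin_induction with
    | mem y hy => exact htN hy
    | algebraMap c => exact hFN c.2
    | add y z _ _ hy hz => exact N.add_mem hy hz
    | mul y z _ _ hy hz => exact N.mul_mem hy hz
  · intro v hv hall
    have hind : Mt.Indep (Set.range v) :=
      AlgebraicIndependent.matroid_indep_iff.mpr hv.to_subtype_range
    have hsub : Set.range v ⊆ Mt.closure t := by
      rintro _ ⟨h, rfl⟩
      exact (hmem _).mp (hall h)
    have hle : (Set.range v).encard ≤ t.encard := by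
      rw [← hind.eRk_eq_encard]
      calc Mt.eRk (Set.range v) ≤ Mt.eRk (Mt.closure t) := Mt.eRk_mono hsub
        _ = Mt.eRk t := Mt.eRk_closure_eq t
        _ ≤ t.encard := Mt.eRk_le_encard t
    exact Set.infinite_range_of_injective hv.injective (ht.finite_of_encard_le hle)


/-- Lemma 6 (lem:fields_intersection), abstract form: let `K` be a field of characteristic
zero with a derivation `δ`, `F ⊆ K₀ ⊆ K` subfields with `K₀` of finite transcendence degree
over `F`, and `u ∈ K` such that `δ(b) ∈ K₀(u)` for all `b ∈ K₀` and the iterated derivatives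
`(δ^h(u))_h` are algebraically independent over `F`.  Then `(δ^h(u))_h` are algebraically
independent over `K₀`. -/
theorem iterated_derivatives_algebraically_independent
    {K : Type*} [Field K] [CharZero K]
    (δ : K → K)
    (hδadd : ∀ a b : K, δ (a + b) = δ a + δ b)
    (hδmul : ∀ a b : K, δ (a * b) = δ a * b + a * δ b)
    (F K₀ : Subfield K) (hFK₀ : F ≤ K₀)
    (htrdeg : ∃ (n : ℕ) (a : Fin n → K), (∀ i, a i ∈ K₀) ∧
      ∀ x ∈ K₀, IsAlgebraic (↥(Subfield.closure ((F : Set K) ∪ Set.range a))) x)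
    (u : K)
    (hder : ∀ b ∈ K₀, δ b ∈ Subfield.closure ((K₀ : Set K) ∪ {u}))
    (hindep : AlgebraicIndependent (↥F) (fun h : ℕ => δ^[h] u)) :
    AlgebraicIndependent (↥K₀) (fun h : ℕ => δ^[h] u) := by
  by_contra hnot
  obtain ⟨h, hh⟩ := exists_isAlgebraic_of_not_algebraicIndependent _ hnot
  obtain ⟨n, a, ha, halg⟩ := htrdeg
  obtain ⟨M, hFM, htM, hMalg, hMover, hMfin⟩ := exists_relative_algebraic_closure F
    (Set.range a ∪ (fun i => δ^[i] u) '' Set.Iio h)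
    ((Set.finite_range a).union ((Set.finite_Iio h).image _))
  have hKM : K₀ ≤ M := by
    intro x hx
    refine hMalg x (isAlgebraic_subfield_of_range_subset Subtype.val_injective M ?_ (halg x hx))
    have : Subfield.closure ((F : Set K) ∪ Set.range a) ≤ M :=
      Subfield.closure_le.mpr (Set.union_subset hFM (Set.subset_union_left.trans htM))
    exact fun r => this r.2
  have hlow : ∀ i < h, δ^[i] u ∈ M := fun i hi => htM (Or.inr ⟨i, hi, rfl⟩)
  have hhM : δ^[h] u ∈ M := by
    refine hMalg _ (isAlgebraic_subfield_of_range_subset Subtype.val_injective M ?_ hh)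
    rintro ⟨r, hr⟩
    induction hr using Algebra.adjoin_induction with
    | mem y hy =>
      obtain ⟨i, hi, rfl⟩ := hy
      exact hlow i hi
    | algebraMap c => exact hKM c.2
    | add y z _ _ hy hz => exact M.add_mem hy hz
    | mul y z _ _ hy hz => exact M.mul_mem hy hz
  have hle : ∀ i ≤ h, δ^[i] u ∈ M := fun i hi => by
    rcases hi.lt_or_eq with hi | rfl
    · exact hlow i hi
    · exact hhM
  have hderM : ∀ b ∈ K₀, δ b ∈ M := fun b hb => by
    have : Subfield.closure ((K₀ : Set K) ∪ {u}) ≤ M :=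
      Subfield.closure_le.mpr (Set.union_subset hKM
        (Set.singleton_subset_iff.mpr (hle 0 (Nat.zero_le h))))
    exact this (hder b hb)
  -- `M` is algebraic over the subfield of all `x ∈ M` with `δ x ∈ M`, because this subfield
  -- contains `F`, the `a i` and the `δ^[i] u` with `i < h`.
  have hδM : ∀ x ∈ M, δ x ∈ M := by
    intro x hx
    refine deriv_mem_of_isAlgebraic δ hδadd hδmul M (derivSubfield δ hδadd hδmul M)
      (fun c hc => hc) hx (hMover _ (fun c hc => And.intro (hFM hc) (hderM c (hFK₀ hc))) ?_ x hx)
    rintro _ (⟨i, rfl⟩ | ⟨i, hi, rfl⟩)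
    · exact ⟨hKM (ha i), hderM _ (ha i)⟩
    · refine ⟨hlow i hi, ?_⟩
      have := hle (i + 1) hi
      rwa [Function.iterate_succ_apply'] at this
  refine hMfin _ hindep fun k => ?_
  induction k with
  | zero => exact hle 0 (Nat.zero_le h)
  | succ k ih =>
    simp only [Function.iterate_succ_apply']
    exact hδM _ ih
end

section
/- Let F ⊆ K₀ ⊆ K be fields such that K₀ has finite transcendence degree d over F, and let (a_h)_{h ∈ ℕ} be a family of elements of K that is algebraically independent over F. Then the set H := { h ∈ ℕ : a_h is algebraic over the subfield K₀(a₀, …, a_{h−1}) generated by K₀ and a₀,…,a_{h−1} } has at most d elements; in particular H is finite. -/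
/-!
Work in the matroid on `K` whose independent sets are the `F`-algebraically independent ones and
whose closure operator is relative algebraic closure. Write `B` for the given transcendence basis
of `K₀` over `F`, and `r n` for the rank of `B ∪ {a₀, …, a_{n-1}}`. Then `r 0 ≤ d`, and passing
from `n` to `n + 1` raises the rank by at most one, and not at all when `n ∈ H`, since then `a_n`
lies in the closure of `B ∪ {a₀, …, a_{n-1}}`. Hence `r n + #(H ∩ {0, …, n-1}) ≤ d + n`. On the
other hand `n ≤ r n` because `a₀, …, a_{n-1}` are independent, so `#(H ∩ {0, …, n-1}) ≤ d` for
every `n`. The counting is `Matroid.card_filter_mem_closure_le`; the translation from subfields to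
matroid closures is `mem_matroid_closure_of_isAlgebraic`.
-/

/-- An element algebraic over the field `F(S)` lies in the closure of `S` in the algebraic
independence matroid, which is phrased through the ring `F[S]`. -/
lemma mem_matroid_closure_of_isAlgebraic {K : Type*} [Field K] (F : Subfield K) (S : Set K) {x : K}
    (hx : IsAlgebraic (↥(Subfield.closure ((F : Set K) ∪ S))) x) :
    x ∈ (AlgebraicIndependent.matroid F K).closure S := by
  rw [AlgebraicIndependent.matroid_closure_eq, SetLike.mem_coe, Subalgebra.mem_algebraicClosure]
  have hF : (F : Set K) = Set.range (algebraMap F K) := by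
    ext y
    exact ⟨fun hy ↦ ⟨⟨y, hy⟩, rfl⟩, fun ⟨z, hz⟩ ↦ hz ▸ z.2⟩
  rw [hF, ← IntermediateField.adjoin_toSubfield] at hx
  open scoped IntermediateField.algebraAdjoinAdjoin in
  exact (IsFractionRing.isAlgebraic_iff (Algebra.adjoin F S) (IntermediateField.adjoin F S) K).mpr
    hx

open scoped Classical in
/-- In an independent sequence, at most `d` terms lie in the closure of their predecessors together
with a fixed set `B` of at most `d` elements. -/
lemma Matroid.card_filter_mem_closure_le {α : Type*} (M : Matroid α) {B : Set α} {d : ℕ}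
    (hB : B.encard ≤ d) {a : ℕ → α} (ha : Function.Injective a) (hind : M.Indep (Set.range a))
    (n : ℕ) :
    ((Finset.range n).filter fun h ↦ a h ∈ M.closure (B ∪ a '' Set.Iio h)).card ≤ d := by
  have key : M.eRk (B ∪ a '' Set.Iio n) +
      ((Finset.range n).filter fun h ↦ a h ∈ M.closure (B ∪ a '' Set.Iio h)).card ≤
      (d : ℕ∞) + n := by
    induction n with
    | zero => simpa using (M.eRk_le_encard B).trans hB
    | succ n ih =>
      have hset : B ∪ a '' Set.Iio (n + 1) = insert (a n) (B ∪ a '' Set.Iio n) := by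
        rw [← Order.succ_eq_add_one, Order.Iio_succ_eq_insert, Set.image_insert_eq,
          Set.union_insert]
      rw [hset, Finset.range_add_one, Finset.filter_insert]
      split_ifs with hn
      · rw [Finset.card_insert_of_notMem (by simp), ← M.eRk_insert_closure_eq,
          Set.insert_eq_of_mem hn, M.eRk_closure_eq]
        push_cast
        rw [← add_assoc, ← add_assoc]
        gcongr
      · push_cast
        rw [← add_assoc]
        refine (add_le_add_left (M.eRk_insert_le_add_one _ _) _).trans ?_
        rw [add_right_comm]
        gcongr
  have hlow : (n : ℕ∞) ≤ M.eRk (B ∪ a '' Set.Iio n) := by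
    have h1 := (hind.subset (Set.image_subset_range a (Set.Iio n))).eRk_eq_encard
    rw [ha.encard_image] at h1
    have h2 : (Set.Iio n).encard = n := by
      rw [← Finset.coe_Iio, Set.encard_coe_eq_coe_finsetCard, Nat.card_Iio]
    rw [← h2, ← h1]
    exact M.eRk_mono Set.subset_union_right
  have h3 := (add_le_add_left hlow _).trans key
  norm_cast at h3
  omega

/-- First Claim in the proof of Lemma 6 (lem:fields_intersection): if `F ⊆ K₀ ⊆ K` are
fields with `K₀` of transcendence degree `d` over `F` (witnessed by a transcendence basis
`b : Fin d → K` of `K₀` over `F`), and `(a_h)_{h∈ℕ}` is a family of elements of `K`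
algebraically independent over `F`, then the set
`H = { h | a_h is algebraic over K₀(a₀,…,a_{h−1}) }` has at most `d` elements;
in particular `H` is finite. -/
theorem algebraic_indices_finite
    {K : Type*} [Field K]
    (F K₀ : Subfield K) (hFK₀ : F ≤ K₀) (d : ℕ)
    (htrdeg : ∃ b : Fin d → K, (∀ i, b i ∈ K₀) ∧ AlgebraicIndependent (↥F) b ∧
      ∀ x ∈ K₀, IsAlgebraic (↥(Subfield.closure ((F : Set K) ∪ Set.range b))) x)
    (a : ℕ → K) (hindep : AlgebraicIndependent (↥F) a) :
    {h : ℕ | IsAlgebraic (↥(Subfield.closure ((K₀ : Set K) ∪ (a '' Set.Iio h)))) (a h)}.Finite ∧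
    {h : ℕ | IsAlgebraic (↥(Subfield.closure ((K₀ : Set K) ∪ (a '' Set.Iio h)))) (a h)}.ncard
      ≤ d := by
  classical
  obtain ⟨b, -, -, halg⟩ := htrdeg
  set H := {h : ℕ | IsAlgebraic (↥(Subfield.closure ((K₀ : Set K) ∪ (a '' Set.Iio h)))) (a h)}
  let M := AlgebraicIndependent.matroid F K
  have hK₀ : (K₀ : Set K) ⊆ M.closure (Set.range b) := fun x hx ↦
    mem_matroid_closure_of_isAlgebraic F _ (halg x hx)
  have hmem : ∀ h ∈ H, a h ∈ M.closure (Set.range b ∪ a '' Set.Iio h) := by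
    intro h hh
    have h1 : a h ∈ M.closure ((K₀ : Set K) ∪ a '' Set.Iio h) := by
      apply mem_matroid_closure_of_isAlgebraic F
      rwa [← Set.union_assoc, Set.union_eq_self_of_subset_left (show (F : Set K) ⊆ K₀ from hFK₀)]
    rw [← M.closure_union_closure_left_eq]
    exact M.closure_subset_closure (Set.union_subset_union_left _ hK₀) h1
  have hB : (Set.range b).encard ≤ d := by
    rw [← Set.image_univ]
    exact (Set.encard_image_le _ _).trans (by simp)
  have hind : M.Indep (Set.range a) :=
    AlgebraicIndependent.matroid_indep_iff.mpr hindep.coe_range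
  have hcard : ∀ T : Finset ℕ, (T : Set ℕ) ⊆ H → T.card ≤ d := by
    intro T hT
    refine (Finset.card_le_card fun h hh ↦ ?_).trans
      (M.card_filter_mem_closure_le hB hindep.injective hind (T.sup id + 1))
    exact Finset.mem_filter.mpr ⟨Finset.mem_range_succ_iff.mpr (Finset.le_sup (f := id) hh),
      hmem h (hT hh)⟩
  have hfin : H.Finite := by
    by_contra hinf
    obtain ⟨T, hT, hTc⟩ := Set.Infinite.exists_subset_card_eq hinf (d + 1)
    have := hcard T hT
    omega
  refine ⟨hfin, ?_⟩
  rw [Set.ncard_eq_toFinset_card H hfin]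
  exact hcard _ (by simp)
end

section
/- Let K be a field of characteristic zero equipped with a derivation δ, let K₀ ⊆ K be a subfield, and let u ∈ K be such that δ(b) lies in the subfield K₀(u) for every b ∈ K₀. If for some h ∈ ℕ the element δ^h(u) is algebraic over the subfield K₀(u, δ(u), …, δ^{h−1}(u)), then δ^{h+1}(u) is algebraic over the subfield K₀(u, δ(u), …, δ^h(u)). -/
/-!
Write `F n = K₀(u, δ u, …, δ^{n-1} u)` and `x = δ^h u`. The derivation maps `F h` into `F (h + 1)`
(`derivation_mem_of_mem_closure`): this can be tested on generators. Differentiating `p(x) = 0`,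
where `p` is the minimal polynomial of `x` over `F h`, gives `p^δ(x) + p'(x) δ x = 0`, where `p^δ`
has coefficients in `F (h + 1)`. In characteristic zero `p'(x) ≠ 0`, so `δ x` is a quotient of
elements of `F (h + 1)`; thus `δ^{h+1} u` even lies in `F (h + 1)`.
-/

open Polynomial

lemma derivation_mem_of_mem_closure {K : Type*} [Field K] (D : Derivation ℤ K K) {s : Set K}
    {E : Subfield K} (hsE : s ⊆ E) (hs : ∀ x ∈ s, D x ∈ E) {x : K}
    (hx : x ∈ Subfield.closure s) : D x ∈ E := by
  have hle : Subfield.closure s ≤ E := Subfield.closure_le.2 hsE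
  induction hx using Subfield.closure_induction with
  | mem x hx => exact hs x hx
  | one => simp
  | add x y hx hy ihx ihy => rw [map_add]; exact add_mem ihx ihy
  | neg x hx ih => rw [map_neg]; exact neg_mem ih
  | inv x hx ih =>
    rw [D.leibniz_inv, smul_eq_mul]
    exact mul_mem (neg_mem (pow_mem (inv_mem (hle hx)) 2)) ih
  | mul x y hx hy ihx ihy =>
    rw [D.leibniz, smul_eq_mul, smul_eq_mul]
    exact add_mem (mul_mem (hle hx) ihy) (mul_mem (hle hy) ihx)

/-- The difference is the value at `x` of `p` with its coefficients differentiated. -/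
lemma derivation_aeval_sub_mem {K : Type*} [Field K] (D : Derivation ℤ K K) {F E : Subfield K}
    (hD : ∀ a ∈ F, D a ∈ E) {x : K} (hx : x ∈ E) (p : F[X]) :
    D (aeval x p) - aeval x (derivative p) * D x ∈ E := by
  induction p using Polynomial.induction_on' with
  | add p q hp hq =>
    convert add_mem hp hq using 1
    simp only [map_add]
    ring
  | monomial n a =>
    convert mul_mem (hD a a.2) (pow_mem hx n) using 1
    rw [derivative_monomial, aeval_monomial, aeval_monomial, D.leibniz, D.leibniz_pow]
    simp only [smul_eq_mul, nsmul_eq_mul, map_mul, map_natCast,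
      show algebraMap F K a = (a : K) from rfl]
    ring

lemma derivation_mem_of_isAlgebraic {K : Type*} [Field K] [CharZero K] (D : Derivation ℤ K K)
    {F E : Subfield K} (hFE : F ≤ E) (hD : ∀ a ∈ F, D a ∈ E) {x : K} (hx : x ∈ E)
    (halg : IsAlgebraic F x) : D x ∈ E := by
  have hne : aeval x (derivative (minpoly F x)) ≠ 0 :=
    (minpoly.irreducible halg.isIntegral).separable.aeval_derivative_ne_zero (minpoly.aeval F x)
  have haeval : aeval x (derivative (minpoly F x)) ∈ E := by
    rw [aeval_eq_sum_range]
    refine sum_mem fun i _ => ?_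
    rw [Algebra.smul_def]
    exact mul_mem (hFE (SetLike.coe_mem _)) (pow_mem hx i)
  have hmem := derivation_aeval_sub_mem D hD hx (minpoly F x)
  rw [minpoly.aeval, map_zero, zero_sub, neg_mem_iff] at hmem
  simpa [hne] using mul_mem (inv_mem haeval) hmem

/-- Second Claim in the proof of Lemma 6 (lem:fields_intersection): let `K` be a field of
characteristic zero with a derivation `δ`, `K₀ ⊆ K` a subfield, and `u ∈ K` with
`δ(b) ∈ K₀(u)` for every `b ∈ K₀`.  If `δ^h(u)` is algebraic over
`K₀(u, δ(u), …, δ^{h−1}(u))`, then `δ^{h+1}(u)` is algebraic over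
`K₀(u, δ(u), …, δ^h(u))`. -/
theorem algebraic_closed_under_successor
    {K : Type*} [Field K] [CharZero K]
    (δ : K → K)
    (hδadd : ∀ a b : K, δ (a + b) = δ a + δ b)
    (hδmul : ∀ a b : K, δ (a * b) = δ a * b + a * δ b)
    (K₀ : Subfield K) (u : K)
    (hder : ∀ b ∈ K₀, δ b ∈ Subfield.closure ((K₀ : Set K) ∪ {u}))
    (h : ℕ)
    (halg : IsAlgebraic
      (↥(Subfield.closure ((K₀ : Set K) ∪ ((fun i : ℕ => δ^[i] u) '' Set.Iio h))))
      (δ^[h] u)) :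
    IsAlgebraic
      (↥(Subfield.closure ((K₀ : Set K) ∪ ((fun i : ℕ => δ^[i] u) '' Set.Iio (h + 1)))))
      (δ^[h + 1] u) := by
  let D : Derivation ℤ K K :=
    Derivation.mk' (AddMonoidHom.mk' δ hδadd).toIntLinearMap fun a b => by
      change δ (a * b) = a * δ b + b * δ a
      rw [hδmul]
      ring
  set E := Subfield.closure ((K₀ : Set K) ∪ ((fun i : ℕ => δ^[i] u) '' Set.Iio (h + 1)))
  have hK₀ : (K₀ : Set K) ⊆ E := fun b hb => Subfield.subset_closure (Or.inl hb)
  have hiter : ∀ i ≤ h, δ^[i] u ∈ E := fun i hi =>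
    Subfield.subset_closure (Or.inr ⟨i, Nat.lt_succ_of_le hi, rfl⟩)
  have hsub : (K₀ : Set K) ∪ ((fun i : ℕ => δ^[i] u) '' Set.Iio h) ⊆ E := by
    rintro _ (hb | ⟨i, hi, rfl⟩)
    · exact hK₀ hb
    · exact hiter i (le_of_lt hi)
  have hgen : ∀ a ∈ (K₀ : Set K) ∪ ((fun i : ℕ => δ^[i] u) '' Set.Iio h), D a ∈ E := by
    rintro _ (hb | ⟨i, hi, rfl⟩)
    · refine (Subfield.closure_le.2 ?_ : Subfield.closure ((K₀ : Set K) ∪ {u}) ≤ E) (hder _ hb)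
      exact Set.union_subset hK₀ (Set.singleton_subset_iff.2 (hiter 0 (Nat.zero_le h)))
    · change δ (δ^[i] u) ∈ E
      rw [← Function.iterate_succ_apply' δ i u]
      exact hiter (i + 1) hi
  have hmem : D (δ^[h] u) ∈ E :=
    derivation_mem_of_isAlgebraic D (Subfield.closure_le.2 hsub)
      (fun a ha => derivation_mem_of_mem_closure D hsub hgen ha) (hiter h le_rfl) halg
  rw [Function.iterate_succ_apply']
  exact isAlgebraic_algebraMap (⟨D (δ^[h] u), hmem⟩ : E)
end
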